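/- Let x ∈ O(m,n) be nondegenerate and not lying in A, with rank r and level ℓ, and suppose x satisfies (†). Then y = x∂_ℓ is a nondegenerate element of O(m−1,n) not lying in A, with rank(y) = r−1 and level(y) = ℓ; y does not satisfy (†); and moreover y̌ = x̌∂_ℓ and ȳ = x̄∂_ℓ. -/

import Mathlib

/-! The relation `ℓ < r` makes `x̌` degenerate at `ℓ`, while (†) makes `x̄` degenerate at `ℓ - 1`.
Hence an operator in either part is determined by its restriction along `∂_ℓ`, and the two parts
stay apart because the value at `r` is retained. So `α ↦ α ∂_ℓ` is injective on `supp x`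
(`hinj` below): nothing cancels in `y = x ∂_ℓ`, the support of `y` is the image of `supp x`, and
every claim about `y` becomes a pointwise statement about the operators in `supp x`. A degeneracy
of `y`, or (†) for `y`, would give a degeneracy of `x`; membership in `A` is unaffected since no
`α ∈ supp x` sends `ℓ < r` to `n` (`npre_comp_face`).

As `ℓ - 1` is a truncated subtraction in `dagger`, the case `ℓ = 0` needs an argument. If `r > 0`,
then `x` would be degenerate at `0`. If `r = 0`, then `x` has initial vertex `n`, and the only such
element of `O(m,n)` is the constant operator, which lies in `A` (`eq_topOp_of_vertex`,
`inA_of_isRank_zero`). That fact is proved by induction on `m`, edges being treated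
separately in `eq_topOp_of_vertex_edge`: in higher dimension the faces of `x` are constant, so
all faces of `x - n` vanish, and a chain with vanishing faces and nonnegative coefficients at
injective operators is zero (`eq_zero_of_faces`). -/

abbrev ZD (a b : ℕ) := (Fin a →o Fin b) →₀ ℤ

noncomputable def act {a b c : ℕ} (x : ZD b c) (β : Fin a →o Fin b) : ZD a c :=
  Finsupp.mapDomain (fun α => α.comp β) x

def face {m : ℕ} (i : Fin (m+1)) : Fin m →o Fin (m+1) :=
  ⟨i.succAbove, (Fin.succAboveOrderEmb i).monotone⟩

def degen {m : ℕ} (i : Fin m) : Fin (m+1) →o Fin m :=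
  ⟨i.predAbove, Fin.predAbove_right_monotone i⟩

def memO {a b : ℕ} (x : ZD a b) : Prop :=
  (x.sum fun _ c => c) = 1 ∧
    ∀ (p : ℕ) (β : Fin (p+1) →o Fin a) (γ : Fin (p+1) →o Fin b),
      Function.Injective ⇑β → Function.Injective ⇑γ → 0 ≤ act x β γ

/-- The witness operation `x ▽ₖ y`, for `x, y ∈ ℤΔ([m],[n])` and `1 ≤ k ≤ m`. -/
noncomputable def fill {m b : ℕ} (k : ℕ) (h1 : 1 ≤ k) (h2 : k ≤ m)
    (x y : ZD (m+1) b) : ZD (m+2) b :=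
  act x (degen ⟨k, by omega⟩)
    - act (act (act x (face ⟨k-1, by omega⟩)) (degen ⟨k-1, by omega⟩)) (degen ⟨k-1, by omega⟩)
    + act y (degen ⟨k-1, by omega⟩)

/-- The pasting operation `x ⋆ₖ y`. -/
noncomputable def paste {m b : ℕ} (k : ℕ) (h1 : 1 ≤ k) (h2 : k ≤ m)
    (x y : ZD (m+1) b) : ZD (m+1) b :=
  x - act (act x (face ⟨k-1, by omega⟩)) (degen ⟨k-1, by omega⟩) + y

/-- `x` is degenerate at `k`, i.e. `x = y σₖ` for some `y` one dimension lower. -/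
def isDegenAt {a b : ℕ} (x : ZD a b) (k : ℕ) : Prop :=
  ∃ (p : ℕ) (hp : a = p + 1) (hk : k < p) (y : ZD p b),
    x = hp ▸ act y (degen ⟨k, hk⟩)

def isDegen {a b : ℕ} (x : ZD a b) : Prop := ∃ k, isDegenAt x k

/-- The number of preimages of the top element `n` under `α`. -/
def npre {a n : ℕ} (α : Fin a →o Fin (n+1)) : ℕ :=
  (Finset.univ.filter fun i => α i = Fin.last n).card

/-- `x` lies in the simplicial subset `A`: all operators in the support of `x`
have equally many preimages of the top element. -/
def inA {a n : ℕ} (x : ZD a (n+1)) : Prop :=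
  ∀ α ∈ x.support, ∀ β ∈ x.support, npre α = npre β

/-- `r` is the rank of `x`: the least `i` such that some `α ∈ supp x` has `α i = n`. -/
def isRank {a n : ℕ} (x : ZD a (n+1)) (r : Fin a) : Prop :=
  IsLeast {i : Fin a | ∃ α ∈ x.support, α i = Fin.last n} r

/-- `x̌`: the part of `x` supported on operators with `α r < n`. -/
noncomputable def checkPart {a n : ℕ} (x : ZD a (n+1)) (r : Fin a) : ZD a (n+1) :=
  x.filter (fun α => ¬ (α r = Fin.last n))

/-- `x̄`: the part of `x` supported on operators with `α r = n`. -/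
noncomputable def barPart {a n : ℕ} (x : ZD a (n+1)) (r : Fin a) : ZD a (n+1) :=
  x.filter (fun α => α r = Fin.last n)

/-- `ℓ` is the level of `x` (with rank `r`). -/
def isLevel {a n : ℕ} (x : ZD a (n+1)) (r ℓ : Fin a) : Prop :=
  IsLeast {i : Fin a | ∀ α ∈ (checkPart x r).support, α i = α r} ℓ

/-- Condition (†): `x̄` is degenerate at `ℓ - 1`. -/
def dagger {a n : ℕ} (x : ZD a (n+1)) (r ℓ : Fin a) : Prop :=
  isDegenAt (barPart x r) ((ℓ : ℕ) - 1)

/-- The corank of `x`: the greatest number of preimages of `n` among operators in `supp x`. -/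
def corank {a n : ℕ} (x : ZD a (n+1)) : ℕ := x.support.sup npre

/-- `u = x̌ + (x̄ ∂ℓ) σ(ℓ-1)`. -/
noncomputable def uPart {m n : ℕ} (x : ZD (m+1) (n+1)) (r ℓ : Fin (m+1))
    (h1 : 1 ≤ (ℓ : ℕ)) : ZD (m+1) (n+1) :=
  checkPart x r
    + act (act (barPart x r) (face ℓ)) (degen ⟨(ℓ:ℕ)-1, by have := ℓ.isLt; omega⟩)

/-- `v = (x̌ ∂(ℓ-1)) σ(ℓ-1) + x̄`. -/
noncomputable def vPart {m n : ℕ} (x : ZD (m+1) (n+1)) (r ℓ : Fin (m+1))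
    (h1 : 1 ≤ (ℓ : ℕ)) : ZD (m+1) (n+1) :=
  act (act (checkPart x r) (face ⟨(ℓ:ℕ)-1, by have := ℓ.isLt; omega⟩))
      (degen ⟨(ℓ:ℕ)-1, by have := ℓ.isLt; omega⟩)
    + barPart x r

/-- The parent `w = x̌ σℓ + x̄ σ(ℓ-1)`. -/
noncomputable def parent {m n : ℕ} (x : ZD (m+1) (n+1)) (r ℓ : Fin (m+1)) :
    ZD (m+2) (n+1) :=
  act (checkPart x r) (degen ℓ)
    + act (barPart x r) (degen ⟨(ℓ:ℕ)-1, by have := ℓ.isLt; omega⟩)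

/-- Bilinear extension of composition: `(x ∘ y)_γ = Σ_{α∘β = γ} x_α · y_β`. -/
noncomputable def zcomp {p m n : ℕ} (x : ZD m n) (y : ZD p m) : ZD p n :=
  x.sum fun α c => c • Finsupp.mapDomain (fun β => α.comp β) y

/-! ### The action of operators on chains -/

theorem act_act {a b c d : ℕ} (x : ZD c d) (β : Fin b →o Fin c) (γ : Fin a →o Fin b) :
    act (act x β) γ = act x (β.comp γ) := by
  unfold act
  rw [← Finsupp.mapDomain_comp]
  rfl

theorem act_single {a b c : ℕ} (α : Fin b →o Fin c) (k : ℤ) (β : Fin a →o Fin b) :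
    act (Finsupp.single α k) β = Finsupp.single (α.comp β) k :=
  Finsupp.mapDomain_single

theorem act_sub {a b c : ℕ} (x y : ZD b c) (β : Fin a →o Fin b) :
    act (x - y) β = act x β - act y β :=
  map_sub (Finsupp.mapDomain.addMonoidHom (M := ℤ)
    (fun α : Fin b →o Fin c => α.comp β)) x y

theorem act_congr {a b c : ℕ} {x : ZD b c} {β γ : Fin a →o Fin b}
    (h : ∀ α ∈ x.support, α.comp β = α.comp γ) : act x β = act x γ :=
  Finsupp.mapDomain_congr h

theorem act_id {b c : ℕ} (x : ZD b c) : act x OrderHom.id = x :=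
  Finsupp.mapDomain_id

theorem act_apply {a b c : ℕ} (x : ZD b c) (β : Fin a →o Fin b) (γ : Fin a →o Fin c) :
    act x β γ = ∑ α ∈ x.support, if α.comp β = γ then x α else 0 := by
  classical
  unfold act Finsupp.mapDomain Finsupp.sum
  rw [Finsupp.finsetSum_apply]
  simp only [Finsupp.single_apply]

/-- If all operators in the support that restrict to the same thing as `α` do so with a
nonnegative coefficient, nothing cancels at `α ∘ β`. -/
theorem act_apply_pos {a b c : ℕ} {x : ZD b c} {β : Fin a →o Fin b} {α : Fin b →o Fin c}
    (hα : α ∈ x.support)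
    (h : ∀ α' ∈ x.support, α'.comp β = α.comp β → 0 ≤ x α') :
    0 < act x β (α.comp β) := by
  rw [act_apply]
  refine Finset.sum_pos' ?_ ⟨α, hα, ?_⟩
  · intro α' hα'
    split_ifs with he
    · exact h α' hα' he
    · exact le_rfl
  · rw [if_pos rfl]
    exact lt_of_le_of_ne (h α hα rfl) (Ne.symm (Finsupp.mem_support_iff.1 hα))

theorem act_apply_unique {a b c : ℕ} {x : ZD b c} {β : Fin a →o Fin b} {α : Fin b →o Fin c}
    (hα : α ∈ x.support)
    (h : ∀ α' ∈ x.support, α'.comp β = α.comp β → α' = α) :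
    act x β (α.comp β) = x α := by
  rw [act_apply, Finset.sum_eq_single_of_mem α hα, if_pos rfl]
  intro α' hα' hne
  rw [if_neg]
  exact fun he => hne (h α' hα' he)

theorem filter_act {a b c : ℕ} {x : ZD b c} {β : Fin a →o Fin b}
    {p : (Fin a →o Fin c) → Prop} {q : (Fin b →o Fin c) → Prop}
    [DecidablePred p] [DecidablePred q]
    (h : ∀ α ∈ x.support, (p (α.comp β) ↔ q α)) :
    (act x β).filter p = act (x.filter q) β := by
  ext γ
  rw [Finsupp.filter_apply, act_apply, act_apply, Finsupp.support_filter, Finset.sum_filter]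
  split_ifs with hp
  · refine Finset.sum_congr rfl fun α hα => ?_
    by_cases he : α.comp β = γ
    · have hq : q α := (h α hα).1 (he ▸ hp)
      simp [he, hq]
    · simp [he]
  · symm
    refine Finset.sum_eq_zero fun α hα => ?_
    by_cases he : α.comp β = γ
    · have hq : ¬ q α := fun hq => hp (he ▸ (h α hα).2 hq)
      simp [hq]
    · simp [he]

theorem act_sum {a b c : ℕ} (x : ZD b c) (β : Fin a →o Fin b) :
    ((act x β).sum fun _ k => k) = x.sum fun _ k => k :=
  Finsupp.sum_mapDomain_index_addMonoidHom (fun _ => AddMonoidHom.id ℤ)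

theorem memO_act {a b c : ℕ} {x : ZD b c} (hx : memO x) {β : Fin a →o Fin b}
    (hβ : Function.Injective β) : memO (act x β) := by
  refine ⟨(act_sum x β).trans hx.1, fun p β' γ hβ' hγ => ?_⟩
  rw [act_act]
  exact hx.2 p _ γ (hβ.comp hβ') hγ

theorem face_injective {m : ℕ} (i : Fin (m+1)) : Function.Injective (face i) :=
  Fin.succAbove_right_injective

theorem face_val {m : ℕ} (i : Fin (m+1)) (j : Fin m) :
    ((face i j : Fin (m+1)) : ℕ) = if (j : ℕ) < i then (j : ℕ) else j + 1 := by
  change ((i.succAbove j : Fin (m+1)) : ℕ) = _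
  unfold Fin.succAbove
  simp only [Fin.lt_def, Fin.val_castSucc]
  split_ifs <;> simp

theorem exists_face_eq {m : ℕ} {i j : Fin (m+1)} (h : j ≠ i) : ∃ k, face i k = j :=
  Fin.exists_succAbove_eq h

theorem comp_face_eq_iff {m b : ℕ} {i : Fin (m+1)} {α α' : Fin (m+1) →o Fin b} :
    α.comp (face i) = α'.comp (face i) ↔ ∀ j, j ≠ i → α j = α' j := by
  constructor
  · intro h j hj
    obtain ⟨k, rfl⟩ := exists_face_eq hj
    exact DFunLike.congr_fun h k
  · intro h
    ext k : 2
    exact h _ (Fin.succAbove_ne i k)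

/-! ### Degeneracy in terms of the support -/

theorem isDegenAt.eq_of_mem {a b : ℕ} {x : ZD a b} {k : ℕ} (h : isDegenAt x k) :
    k + 1 < a ∧ ∀ α ∈ x.support, ∀ i j : Fin a, (i : ℕ) = k → (j : ℕ) = k + 1 → α i = α j := by
  classical
  obtain ⟨p, rfl, hk, y, rfl⟩ := h
  refine ⟨by omega, fun α hα i j hi hj => ?_⟩
  obtain ⟨γ, -, rfl⟩ := Finset.mem_image.1 (Finsupp.mapDomain_support hα)
  change γ ((⟨k, hk⟩ : Fin p).predAbove i) = γ ((⟨k, hk⟩ : Fin p).predAbove j)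
  congr 1
  ext
  simp only [Fin.predAbove, Fin.lt_def, Fin.val_castSucc]
  split_ifs <;> simp <;> omega

/-- A chain supported on operators degenerate at `k` is degenerate at `k`: it equals
`(x ∂_{k+1}) σ_k`. -/
theorem isDegenAt_of_forall {m b : ℕ} {x : ZD (m+1) b} {k : ℕ} (hk : k < m)
    (h : ∀ α ∈ x.support, α ⟨k, by omega⟩ = α ⟨k + 1, by omega⟩) : isDegenAt x k := by
  refine ⟨m, rfl, hk, act x (face ⟨k + 1, by omega⟩), ?_⟩
  change x = act (act x _) _
  rw [act_act]
  conv_lhs => rw [← act_id x]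
  refine act_congr fun α hα => ?_
  ext i : 2
  change α i = α (face ⟨k + 1, by omega⟩ (degen ⟨k, hk⟩ i))
  have hv : ((degen ⟨k, hk⟩ i : Fin m) : ℕ) = if k < i then (i : ℕ) - 1 else i := by
    change (((⟨k, hk⟩ : Fin m).predAbove i : Fin m) : ℕ) = _
    simp only [Fin.predAbove, Fin.lt_def, Fin.val_castSucc]
    split_ifs <;> simp
  by_cases hi : (i : ℕ) = k + 1
  · have e1 : i = ⟨k + 1, by omega⟩ := Fin.ext hi
    have e2 : face ⟨k + 1, by omega⟩ (degen ⟨k, hk⟩ i) = (⟨k, by omega⟩ : Fin (m+1)) := by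
      ext
      rw [face_val, hv]
      simp only
      split_ifs <;> omega
    rw [e2, h α hα, e1]
  · congr 1
    ext
    rw [face_val, hv]
    simp only
    split_ifs <;> omega

/-! ### Elements of `O(m,n)` with initial vertex `n` -/

/-- The operator with constant value `n`. -/
def topOp (a n : ℕ) : Fin a →o Fin (n+1) := OrderHom.const _ (Fin.last n)

/-- The operator `[0] → [m]` picking out the vertex `i`. -/
def vert {a : ℕ} (i : Fin a) : Fin 1 →o Fin a := OrderHom.const _ i

theorem vert_injective {a : ℕ} (i : Fin a) : Function.Injective (vert i) :=
  Function.injective_of_subsingleton _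

theorem comp_vert {a b : ℕ} (β : Fin a →o Fin b) (i : Fin a) : β.comp (vert i) = vert (β i) :=
  rfl

theorem eq_topOp_of_apply_zero {m n : ℕ} {γ : Fin (m+1) →o Fin (n+1)} (h : γ 0 = Fin.last n) :
    γ = topOp (m+1) n := by
  ext j : 2
  refine le_antisymm (Fin.le_last _) ?_
  change Fin.last n ≤ γ j
  rw [← h]
  exact γ.monotone (Fin.zero_le j)

theorem not_injective_topOp (m n : ℕ) : ¬ Function.Injective (topOp (m+2) n) := by
  intro h
  have := @h 0 1 rfl
  exact absurd this (by simp)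

theorem memO_vertex {b : ℕ} {w : ZD 1 b} (hw : memO w) {γ : Fin 1 →o Fin b} (hγ : w γ ≠ 0) :
    w = Finsupp.single γ 1 := by
  have h0 : ∀ δ, 0 ≤ w δ := by
    intro δ
    have := hw.2 0 OrderHom.id δ (fun _ _ h => h)
      (Function.injective_of_subsingleton (α := Fin 1) _)
    rwa [act_id] at this
  have hs : ∑ δ ∈ w.support, w δ = 1 := hw.1
  have hmem : γ ∈ w.support := Finsupp.mem_support_iff.2 hγ
  have hpos := h0 γ
  have hle : ∀ δ, δ ≠ γ → w δ = 0 := by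
    classical
    intro δ hne
    by_contra hδ
    have hmem' : δ ∈ w.support := Finsupp.mem_support_iff.2 hδ
    have hsub : ({δ, γ} : Finset _) ⊆ w.support := by
      intro t ht
      rcases Finset.mem_insert.1 ht with rfl | ht
      · exact hmem'
      · rwa [Finset.mem_singleton.1 ht]
    have h2 := Finset.sum_le_sum_of_subset_of_nonneg (f := fun t => w t) hsub
      (fun t _ _ => h0 t)
    rw [Finset.sum_pair hne, hs] at h2
    have := h0 δ
    omega
  have h1 : w γ = 1 := by
    rw [← hs, Finset.sum_eq_single_of_mem γ hmem (fun δ _ hne => hle δ hne)]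
  ext δ
  by_cases hne : δ = γ
  · rw [hne, h1, Finsupp.single_eq_same]
  · rw [hle δ hne, Finsupp.single_apply, if_neg (Ne.symm hne)]

/-- A chain all of whose faces vanish and whose coefficients at injective operators are
nonnegative is zero. A maximal `α` in the support cannot satisfy `α k = α (k+1)`, since it would
be the only contribution to a coefficient of the face `k + 1`; so it is injective, and then all
contributions to the coefficient of the face `0` at `α ∂₀` are nonnegative. -/
theorem eq_zero_of_faces {m b : ℕ} {z : ZD (m+2) b}
    (hf : ∀ i : Fin (m+2), act z (face i) = 0)
    (hn : ∀ γ : Fin (m+2) →o Fin b, Function.Injective γ → 0 ≤ z γ) : z = 0 := by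
  by_contra hz
  obtain ⟨α, hmax⟩ := z.support.exists_maximal (Finsupp.support_nonempty_iff.2 hz)
  have hα : α ∈ z.support := hmax.prop
  have hzα : z α ≠ 0 := Finsupp.mem_support_iff.1 hα
  have hstep : ∀ k : Fin (m+1), α k.castSucc < α k.succ := by
    intro k
    by_contra hk
    have hk : α k.succ ≤ α k.castSucc := not_lt.1 hk
    refine hzα ?_
    rw [← act_apply_unique (β := face k.succ) hα, hf]
    · rfl
    · intro α' hα' he
      rw [comp_face_eq_iff] at he
      have hle : α ≤ α' := by
        intro j
        by_cases hj : j = k.succ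
        · rw [hj]
          refine hk.trans ?_
          rw [← he k.castSucc (Fin.castSucc_lt_succ).ne]
          exact α'.monotone (Fin.castSucc_lt_succ).le
        · exact (he j hj).ge
      exact le_antisymm (hmax.le_of_ge hα' hle) hle
  have hpos : 0 < act z (face 0) (α.comp (face 0)) := by
    refine act_apply_pos hα fun α' hα' he => hn α' ?_
    rw [comp_face_eq_iff] at he
    refine (Fin.strictMono_iff_lt_succ.2 fun k => ?_).injective
    have h0 : α' 0 ≤ α 0 := by
      by_contra hlt
      have hle : α ≤ α' := by
        intro j
        by_cases hj : j = 0
        · rw [hj]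
          exact (not_le.1 hlt).le
        · exact (he j hj).ge
      exact hlt (hmax.le_of_ge hα' hle 0)
    rw [he k.succ (Fin.succ_ne_zero k)]
    refine lt_of_le_of_lt ?_ (hstep k)
    by_cases hk : k.castSucc = 0
    · rw [hk]
      exact h0
    · exact (he _ hk).le
  rw [hf] at hpos
  exact lt_irrefl _ hpos

/-- The one-dimensional case of `eq_topOp_of_vertex`: no nontrivial path starts at `n`. -/
theorem eq_topOp_of_vertex_edge {n : ℕ} {x : ZD 2 (n+1)} (hx : memO x)
    (h0 : act x (face 1) = Finsupp.single (topOp 1 n) 1) (h1 : x (topOp 2 n) = 1) :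
    x = Finsupp.single (topOp 2 n) 1 := by
  rw [← sub_eq_zero]
  by_contra hz
  set z := x - Finsupp.single (topOp 2 n) 1 with hzdef
  have hface : act z (face 1) = 0 := by
    rw [hzdef, act_sub, h0, act_single, sub_eq_zero]
    rfl
  have hztop : z (topOp 2 n) = 0 := by
    rw [hzdef, Finsupp.sub_apply, h1, Finsupp.single_eq_same, sub_self]
  have hxz : ∀ γ, γ ≠ topOp 2 n → z γ = x γ := by
    intro γ hγ
    rw [hzdef, Finsupp.sub_apply, Finsupp.single_apply, if_neg (Ne.symm hγ), sub_zero]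
  obtain ⟨α, hmin⟩ := z.support.exists_minimal (Finsupp.support_nonempty_iff.2 hz)
  have hα : α ∈ z.support := hmin.prop
  have hpos : 0 < act z (face 1) (α.comp (face 1)) := by
    refine act_apply_pos hα fun α' hα' he => ?_
    rw [comp_face_eq_iff] at he
    have he0 : α' 0 = α 0 := he 0 (by simp)
    have hne : α' ≠ topOp 2 n := by
      rintro rfl
      exact Finsupp.mem_support_iff.1 hα' hztop
    have hmono : α' 0 ≤ α' 1 := α'.monotone (by simp)
    have hmono2 : α 0 ≤ α 1 := α.monotone (by simp)
    rcases hmono.lt_or_eq with hlt | heq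
    · rw [hxz _ hne]
      have := hx.2 1 OrderHom.id α' (fun _ _ h => h)
        (Fin.strictMono_iff_lt_succ.2 fun k => by
          have : k = 0 := Subsingleton.elim _ _
          subst this
          exact hlt).injective
      rwa [act_id] at this
    · -- Here `α'` is constant, so below `α`; by minimality it is `α`, and its coefficient
      -- is that of a vertex of `x`.
      have hle : α' ≤ α := by
        intro j
        fin_cases j
        · exact he0.le
        · change α' 1 ≤ α 1
          rw [← heq, he0]
          exact hmono2
      obtain rfl : α' = α := le_antisymm hle (hmin.le_of_le hα' hle)
      rw [← act_apply_unique (β := face 0) hα']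
      · have hv : α'.comp (face 0) ≠ topOp 1 n := by
          intro hv
          have h1' : α' 1 = Fin.last n := DFunLike.congr_fun hv 0
          refine hne ?_
          ext j : 2
          fin_cases j
          · exact heq.trans h1'
          · exact h1'
        have hsub : act z (face 0) (α'.comp (face 0)) = act x (face 0) (α'.comp (face 0)) := by
          rw [hzdef, act_sub, act_single, Finsupp.sub_apply, Finsupp.single_apply, if_neg,
            sub_zero]
          exact fun h => hv h.symm
        rw [hsub]
        exact hx.2 0 (face 0) _ (face_injective 0)
          (Function.injective_of_subsingleton (α := Fin 1) _)
      · intro γ hγ hc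
        rw [comp_face_eq_iff] at hc
        have hc1 : γ 1 = α' 1 := hc 1 (by simp)
        have hγle : γ ≤ α' := by
          intro j
          fin_cases j
          · change γ 0 ≤ α' 0
            rw [heq, ← hc1]
            exact γ.monotone (by simp)
          · exact hc1.le
        exact le_antisymm hγle (hmin.le_of_le hγ hγle)
  rw [hface] at hpos
  exact lt_irrefl _ hpos

/-- The only element of `O(m,n)` with initial vertex `n` is the constant operator. -/
theorem eq_topOp_of_vertex {n : ℕ} : ∀ (m : ℕ) (x : ZD (m+1) (n+1)), memO x →
    act x (vert 0) = Finsupp.single (topOp 1 n) 1 → x = Finsupp.single (topOp (m+1) n) 1 := by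
  intro m
  induction m with
  | zero =>
    intro x _ h
    rwa [show (vert 0 : Fin 1 →o Fin 1) = OrderHom.id from
      OrderHom.ext _ _ (Subsingleton.elim _ _), act_id] at h
  | succ m ih =>
    intro x hx h
    have hpos : ∀ i : Fin (m+2), i ≠ 0 →
        act x (face i) = Finsupp.single (topOp (m+1) n) 1 := by
      intro i hi
      refine ih _ (memO_act hx (face_injective i)) ?_
      rw [act_act, comp_vert, show face i 0 = 0 from Fin.succAbove_ne_zero_zero hi, h]
    cases m with
    | zero =>
      refine eq_topOp_of_vertex_edge hx (hpos 1 (by simp)) ?_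
      by_cases ht : topOp 2 n ∈ x.support
      · rw [← act_apply_unique (β := face 1) ht, hpos 1 (by simp)]
        · exact Finsupp.single_eq_same
        · intro γ _ hc
          rw [comp_face_eq_iff] at hc
          have hc0 : γ 0 = Fin.last n := hc 0 (by simp)
          exact eq_topOp_of_apply_zero hc0
      · exfalso
        have hc : act x (face 1) (topOp 1 n) = 0 := by
          rw [act_apply]
          refine Finset.sum_eq_zero fun γ hγ => if_neg fun hc => ht ?_
          have hc0 : γ 0 = Fin.last n := DFunLike.congr_fun hc 0
          rwa [← eq_topOp_of_apply_zero hc0]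
        rw [hpos 1 (by simp), Finsupp.single_eq_same] at hc
        exact one_ne_zero hc
    | succ m =>
      -- The initial vertex of `x ∂₀` is the vertex `1` of `x`, which also lies in `x ∂₂`.
      have hzero : act x (face 0) = Finsupp.single (topOp (m+2) n) 1 := by
        refine ih _ (memO_act hx (face_injective 0)) ?_
        have e : (face 0 : Fin (m+2) →o Fin (m+3)) 0 = face ⟨2, by omega⟩ 1 := by
          ext
          simp [face_val]
        rw [act_act, comp_vert, e, ← comp_vert, ← act_act,
          hpos ⟨2, by omega⟩ (by simp [Fin.ext_iff]), act_single]
        rfl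
      rw [← sub_eq_zero]
      refine eq_zero_of_faces ?_ ?_
      · intro i
        rw [act_sub, act_single, sub_eq_zero]
        by_cases hi : i = 0
        · rw [hi, hzero]
          rfl
        · rw [hpos i hi]
          rfl
      · intro γ hγ
        rw [Finsupp.sub_apply, Finsupp.single_apply, if_neg, sub_zero]
        · have := hx.2 _ OrderHom.id γ (fun _ _ h => h) hγ
          rwa [act_id] at this
        · rintro rfl
          exact not_injective_topOp _ _ hγ

/-- If the rank is `0`, then `x` is the constant operator and so lies in `A`. -/
theorem inA_of_isRank_zero {m n : ℕ} {x : ZD (m+1) (n+1)} (hx : memO x) (hr : isRank x 0) :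
    inA x := by
  obtain ⟨α, hα, hα0⟩ := hr.1
  have htop : ∀ γ : Fin (m+1) →o Fin (n+1), γ 0 = Fin.last n → γ = topOp (m+1) n :=
    fun _ h => eq_topOp_of_apply_zero h
  have hv : act x (vert 0) (α.comp (vert 0)) = x α :=
    act_apply_unique hα fun γ _ hc => by
      have : γ 0 = α 0 := DFunLike.congr_fun hc 0
      rw [htop γ (this.trans hα0), htop α hα0]
  have hx1 := eq_topOp_of_vertex m x hx (by
    have h := memO_vertex (memO_act hx (vert_injective 0))
      (γ := α.comp (vert 0)) (by rw [hv]; exact Finsupp.mem_support_iff.1 hα)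
    rw [h, htop α hα0]
    rfl)
  have huniq : ∀ γ ∈ x.support, γ = topOp (m+1) n := by
    intro γ hγ
    rw [hx1] at hγ
    exact Finset.mem_singleton.1 (Finsupp.support_single_subset hγ)
  intro γ hγ δ hδ
  rw [huniq γ hγ, huniq δ hδ]

/-! ### The child -/

theorem mem_checkPart {a n : ℕ} {x : ZD a (n+1)} {r : Fin a} {α : Fin a →o Fin (n+1)} :
    α ∈ (checkPart x r).support ↔ α ∈ x.support ∧ α r ≠ Fin.last n := by
  unfold checkPart
  rw [Finsupp.support_filter, Finset.mem_filter]

theorem mem_barPart {a n : ℕ} {x : ZD a (n+1)} {r : Fin a} {α : Fin a →o Fin (n+1)} :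
    α ∈ (barPart x r).support ↔ α ∈ x.support ∧ α r = Fin.last n := by
  unfold barPart
  rw [Finsupp.support_filter, Finset.mem_filter]

/-- Omitting a position not sent to `n` does not change the number of preimages of `n`. -/
theorem npre_comp_face {m n : ℕ} {α : Fin (m+1) →o Fin (n+1)} {i : Fin (m+1)}
    (h : α i ≠ Fin.last n) : npre (α.comp (face i)) = npre α := by
  classical
  unfold npre
  refine Finset.card_bij (fun j _ => face i j) ?_ ?_ ?_
  · intro j hj
    simpa using hj
  · intro j _ k _ hjk
    exact face_injective i hjk
  · intro j hj
    have hj' : α j = Fin.last n := by simpa using hj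
    obtain ⟨k, rfl⟩ := exists_face_eq (i := i) (j := j) (by rintro rfl; exact h hj')
    exact ⟨k, by simpa using hj', rfl⟩

/-- Claim (child): if `x` satisfies (†), its child `y = x ∂ℓ` is a nondegenerate
element of `O(m-1,n) \ A` with rank `r-1` and level `ℓ`, not satisfying (†), and
`y̌ = x̌ ∂ℓ`, `ȳ = x̄ ∂ℓ`. -/
theorem stmt14 (m n : ℕ) (x : ZD (m+1) (n+1)) (hx : memO x) (hnd : ¬ isDegen x)
    (hA : ¬ inA x) (r ℓ : Fin (m+1)) (hr : isRank x r) (hl : isLevel x r ℓ)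
    (hdag : dagger x r ℓ) :
    memO (act x (face ℓ)) ∧ ¬ isDegen (act x (face ℓ)) ∧ ¬ inA (act x (face ℓ)) ∧
    ∃ (r' ℓ' : Fin m), (r' : ℕ) = (r : ℕ) - 1 ∧ (ℓ' : ℕ) = (ℓ : ℕ) ∧
      isRank (act x (face ℓ)) r' ∧ isLevel (act x (face ℓ)) r' ℓ' ∧
      ¬ dagger (act x (face ℓ)) r' ℓ' ∧
      checkPart (act x (face ℓ)) r' = act (checkPart x r) (face ℓ) ∧
      barPart (act x (face ℓ)) r' = act (barPart x r) (face ℓ) := by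
  classical
  have hr0 : 0 < (r : ℕ) := by
    rcases Nat.eq_zero_or_pos (r : ℕ) with h | h
    · obtain rfl : r = 0 := Fin.ext h
      exact absurd (inA_of_isRank_zero hx hr) hA
    · exact h
  have hrm := r.isLt
  have hlr : (ℓ : ℕ) ≤ r := hl.2 fun α _ => rfl
  have hrank : ∀ α ∈ x.support, ∀ i : Fin (m+1), (i : ℕ) < r → α i ≠ Fin.last n := by
    intro α hα i hi h
    have : (r : ℕ) ≤ i := hr.2 ⟨α, hα, h⟩
    omega
  obtain ⟨hlt, hbar⟩ := hdag.eq_of_mem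
  have hcheck : ∀ α ∈ x.support, α r ≠ Fin.last n → ∀ i : Fin (m+1), (ℓ : ℕ) ≤ i → (i : ℕ) ≤ r →
      α i = α r := by
    intro α hα hαr i h1 h2
    refine le_antisymm (α.monotone h2) ?_
    rw [← hl.1 α (mem_checkPart.2 ⟨hα, hαr⟩)]
    exact α.monotone h1
  -- Otherwise `x̄ ≠ 0` would be degenerate at `r - 1`, against the minimality of the rank.
  have hlr' : (ℓ : ℕ) < r := by
    refine lt_of_le_of_ne hlr fun he => ?_
    obtain ⟨α, hα, hαr⟩ := hr.1
    have h := hbar α (mem_barPart.2 ⟨hα, hαr⟩) ⟨(r : ℕ) - 1, by omega⟩ r (by simp [he])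
      (by omega)
    exact hrank α hα ⟨(r : ℕ) - 1, by omega⟩ (Nat.sub_lt hr0 one_pos) (h.trans hαr)
  -- For `ℓ = 0` both `x̌` and `x̄` would be degenerate at `0 = ℓ - 1` (truncated subtraction).
  have hl0 : 0 < (ℓ : ℕ) := by
    rcases Nat.eq_zero_or_pos (ℓ : ℕ) with h | h
    · refine absurd ⟨0, isDegenAt_of_forall (by omega) fun α hα => ?_⟩ hnd
      by_cases hαr : α r = Fin.last n
      · exact hbar α (mem_barPart.2 ⟨hα, hαr⟩) _ _ (by simp [h]) (by simp [h])
      · rw [hcheck α hα hαr ⟨0, by omega⟩ (by simp [h]) (by simp),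
          hcheck α hα hαr ⟨0 + 1, by omega⟩ (by simp [h]) (by simp; omega)]
    · exact h
  have hbar' : ∀ α ∈ x.support, α r = Fin.last n → ∀ i : Fin (m+1), (i : ℕ) + 1 = ℓ →
      α i = α ℓ := fun α hα hαr i hi =>
    hbar α (mem_barPart.2 ⟨hα, hαr⟩) i ℓ (by omega) (by omega)
  have hinj : Set.InjOn (fun α : Fin (m+1) →o Fin (n+1) => α.comp (face ℓ)) x.support := by
    intro α hα α' hα' he
    have hα : α ∈ x.support := hα
    have hα' : α' ∈ x.support := hα'
    have he : ∀ j, j ≠ ℓ → α j = α' j := comp_face_eq_iff.1 he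
    have her : α r = α' r := he r (by rw [Ne, Fin.ext_iff]; omega)
    have hel : α ℓ = α' ℓ := by
      by_cases hαr : α r = Fin.last n
      · have hi : (⟨(ℓ : ℕ) - 1, by omega⟩ : Fin (m+1)) ≠ ℓ := by
          rw [Ne, Fin.ext_iff]; simp; omega
        rw [← hbar' α hα hαr ⟨(ℓ : ℕ) - 1, by omega⟩ (by simp; omega),
          ← hbar' α' hα' (her ▸ hαr) ⟨(ℓ : ℕ) - 1, by omega⟩ (by simp; omega), he _ hi]
      · rw [hcheck α hα hαr ℓ le_rfl hlr, hcheck α' hα' (her ▸ hαr) ℓ le_rfl hlr, her]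
    ext j : 2
    by_cases hj : j = ℓ
    · rw [hj, hel]
    · exact he j hj
  have hsupp : (act x (face ℓ)).support = x.support.image fun α => α.comp (face ℓ) :=
    Finsupp.mapDomain_support_of_injOn x hinj
  have hmem : ∀ α ∈ x.support, α.comp (face ℓ) ∈ (act x (face ℓ)).support := fun α hα => by
    rw [hsupp]
    exact Finset.mem_image_of_mem _ hα
  have hfv : ∀ (i : Fin m) (j : Fin (m+1)),
      (j : ℕ) = (if (i : ℕ) < ℓ then (i : ℕ) else i + 1) → face ℓ i = j :=
    fun i j h => Fin.ext ((face_val ℓ i).trans h.symm)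
  have hfr : face ℓ ⟨(r : ℕ) - 1, by omega⟩ = r := hfv _ _ (by simp; split_ifs <;> omega)
  have hfl : ((face ℓ ⟨ℓ, by omega⟩ : Fin (m+1)) : ℕ) = ℓ + 1 := by simp [face_val]
  have hck : checkPart (act x (face ℓ)) ⟨(r : ℕ) - 1, by omega⟩
      = act (checkPart x r) (face ℓ) :=
    filter_act fun α _ => by
      change ¬ (α (face ℓ _) = _) ↔ _
      rw [hfr]
  have hbr : barPart (act x (face ℓ)) ⟨(r : ℕ) - 1, by omega⟩
      = act (barPart x r) (face ℓ) :=
    filter_act fun α _ => by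
      change α (face ℓ _) = _ ↔ _
      rw [hfr]
  refine ⟨memO_act hx (face_injective ℓ), ?_, ?_, ⟨(r : ℕ) - 1, by omega⟩, ⟨ℓ, by omega⟩, rfl, rfl,
    ?_, ?_, ?_, hck, hbr⟩
  · rintro ⟨k, hk⟩
    obtain ⟨hkm, hk⟩ := hk.eq_of_mem
    have hk' : ∀ α ∈ x.support, α (face ℓ ⟨k, by omega⟩) = α (face ℓ ⟨k + 1, hkm⟩) :=
      fun α hα => hk _ (hmem α hα) _ _ rfl rfl
    -- The degeneracy of `x ∂_ℓ` at `k` lifts to `x`, shifted by one when `k ≥ ℓ`;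
    -- for `k = ℓ - 1` it says `α (ℓ - 1) = α (ℓ + 1)`, squeezing `α ℓ`.
    rcases lt_or_ge k ℓ with hkl | hkl
    · refine hnd ⟨k, isDegenAt_of_forall (by omega) fun α hα => ?_⟩
      have h := hk' α hα
      rw [hfv ⟨k, by omega⟩ ⟨k, by omega⟩ (by simp [hkl])] at h
      refine le_antisymm (α.monotone (by simp)) ?_
      rw [h]
      refine α.monotone ?_
      rw [Fin.le_def, face_val]
      simp only
      split_ifs <;> omega
    · refine hnd ⟨k + 1, isDegenAt_of_forall (by omega) fun α hα => ?_⟩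
      have h := hk' α hα
      rwa [hfv ⟨k, by omega⟩ ⟨k + 1, by omega⟩ (by simp; omega),
        hfv ⟨k + 1, by omega⟩ ⟨k + 1 + 1, by omega⟩ (by simp; omega)] at h
  · intro hA'
    refine hA fun α hα α' hα' => ?_
    rw [← npre_comp_face (hrank α hα ℓ hlr'), ← npre_comp_face (hrank α' hα' ℓ hlr')]
    exact hA' _ (hmem α hα) _ (hmem α' hα')
  · constructor
    · obtain ⟨α, hα, hαr⟩ := hr.1
      refine ⟨_, hmem α hα, ?_⟩
      change α (face ℓ _) = _
      rw [hfr, hαr]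
    · rintro i ⟨δ, hδ, hi⟩
      rw [hsupp] at hδ
      obtain ⟨α, hα, rfl⟩ := Finset.mem_image.1 hδ
      have h : (r : ℕ) ≤ (face ℓ i : Fin (m+1)) := hr.2 ⟨α, hα, hi⟩
      rw [face_val] at h
      change (r : ℕ) - 1 ≤ i
      split_ifs at h <;> omega
  · constructor
    · intro δ hδ
      obtain ⟨hδ, hδr⟩ := mem_checkPart.1 hδ
      rw [hsupp] at hδ
      obtain ⟨α, hα, rfl⟩ := Finset.mem_image.1 hδ
      change α (face ℓ _) ≠ _ at hδr
      change α (face ℓ _) = α (face ℓ _)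
      rw [hfr] at hδr ⊢
      exact hcheck α hα hδr _ (by omega) (by omega)
    · intro i hi
      change (ℓ : ℕ) ≤ i
      by_contra hlt'
      have : (ℓ : ℕ) ≤ (face ℓ i : Fin (m+1)) := hl.2 fun α hα => by
        obtain ⟨hα, hαr⟩ := mem_checkPart.1 hα
        have h := hi (α.comp (face ℓ)) (mem_checkPart.2 ⟨hmem α hα, by
          change α (face ℓ _) ≠ _
          rwa [hfr]⟩)
        change α (face ℓ i) = α (face ℓ _) at h
        rwa [hfr] at h
      rw [face_val] at this
      split_ifs at this <;> omega
  · intro hd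
    obtain ⟨-, hd⟩ := hd.eq_of_mem
    -- If `ȳ` were degenerate at `ℓ - 1`, then `x̄`, like `x̌`, would be degenerate at `ℓ`.
    refine hnd ⟨ℓ, isDegenAt_of_forall (by omega) fun α hα => ?_⟩
    by_cases hαr : α r = Fin.last n
    · have h := hd (α.comp (face ℓ)) (mem_barPart.2 ⟨hmem α hα, by
          change α (face ℓ _) = _
          rwa [hfr]⟩) ⟨(ℓ : ℕ) - 1, by omega⟩ ⟨ℓ, by omega⟩ rfl (by simp; omega)
      change α (face ℓ _) = α (face ℓ _) at h
      rw [hfv ⟨(ℓ : ℕ) - 1, by omega⟩ ⟨(ℓ : ℕ) - 1, by omega⟩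
          (if_pos (Nat.sub_lt hl0 one_pos)).symm,
        hfv ⟨ℓ, by omega⟩ ⟨ℓ + 1, by omega⟩ (by simp),
        hbar' α hα hαr _ (by simp; omega)] at h
      exact h
    · rw [hcheck α hα hαr ⟨ℓ, by omega⟩ le_rfl hlr,
        hcheck α hα hαr ⟨ℓ + 1, by omega⟩ (by simp) (by simp; omega)]
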